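/- With weights w_n = ((n−1)!)^α, 0 < α < 1, the degree σ(s) of the vertex adjacent to the root in the random tree T_N satisfies σ(s) = N − O_p(N^{1−α}); that is, (N − σ(s))/N^{1−α} is bounded in probability as N → ∞. -/

import Mathlib

open Filter

/-- Rooted planar trees (the tree hanging from the vertex `s` next to the root `r`;
the full tree of the paper with `N` edges corresponds to a `PTree` with `N` vertices,
plus the extra root `r` of degree 1 attached to the root `s` of the `PTree`). -/
inductive PTree : Type where
  | node : List PTree → PTree

namespace PTree

/-- The (ordered) subtrees attached to the root. -/
def children : PTree → List PTree
  | node ts => ts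

/-- Number of vertices of the `PTree`, i.e. the number `N` of edges of the paper's tree. -/
def size : PTree → ℕ
  | node ts => 1 + (ts.attach.map (fun t => size t.1)).sum
decreasing_by simp [PTree.node.sizeOf_spec]; have := List.sizeOf_lt_of_mem t.2; omega

/-- The weight `∏_{v ≠ r} w_{σ(v)}`: every vertex `v ≠ r` has degree `outdeg(v) + 1`. -/
noncomputable def weight (w : ℕ → ℝ) : PTree → ℝ
  | node ts => w (ts.length + 1) * (ts.attach.map (fun t => weight w t.1)).prod
decreasing_by simp [PTree.node.sizeOf_spec]; have := List.sizeOf_lt_of_mem t.2; omega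

/-- The number of vertices of outdegree `k`, i.e. the number `X_{k+1}` of vertices
(other than `r`) of degree `k+1`. -/
def countOutdeg (k : ℕ) : PTree → ℕ
  | node ts => (if ts.length = k then 1 else 0) + (ts.attach.map (fun t => countOutdeg k t.1)).sum
decreasing_by simp [PTree.node.sizeOf_spec]; have := List.sizeOf_lt_of_mem t.2; omega

/-- The maximal outdegree of a vertex of the tree. -/
def maxOutdeg : PTree → ℕ
  | node ts => max ts.length ((ts.attach.map (fun t => maxOutdeg t.1)).foldr max 0)
decreasing_by simp [PTree.node.sizeOf_spec]; have := List.sizeOf_lt_of_mem t.2; omega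

/-- Outdegree of the first (leftmost) child `s₁` of `s` (0 if there is none). -/
def firstChildOutdeg : PTree → ℕ
  | node [] => 0
  | node (t :: _) => t.children.length

end PTree

/-- The partition function `Z_N = Σ_{τ ∈ Γ_N} ∏_{v ∈ V(τ)∖{r}} w_{σ(v)}`. -/
noncomputable def Zfun (w : ℕ → ℝ) (N : ℕ) : ℝ :=
  ∑' t : {t : PTree // t.size = N}, t.1.weight w

/-- `ν_N(P)`: probability of the event `P` under the simply generated measure `ν_N`. -/
noncomputable def nu (w : ℕ → ℝ) (N : ℕ) (P : PTree → Prop) : ℝ :=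
  (∑' t : {t : PTree // t.size = N ∧ P t}, t.1.weight w) / Zfun w N


/-!
By the cycle lemma, the number of children of `s` under `ν_{n+1}` has the law of a size-biased part
of `n = k_1 + ⋯ + k_{n+1}`, where `(k_i)` has weight `∏ v_{k_i}` with `v_k = w_{k+1} = (k!)^α`. At
most one part can exceed `n / 2`. If all the other parts do not, their generating function is
`Φ(x) = ∑_{j ≤ n/2} v_j x^j` with `Φ(x) = 1 + O(n^{-α})` at `x = (3/n)^α`, so that
`Φ(x)^{n+1} = exp(O(n^{1-α}))`. On the other hand `k! ≤ n! (e/n)^{n-k}` gives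
`v_k ≤ v_n (r x)^{n-k}` with `r = (e/3)^α < 1`. A Chernoff bound at `x` therefore shows that the
weight of the configurations whose largest part is below `n - a` is at most `v_n r^a Φ(x)^{n+1}` up
to a polynomial factor, which is negligible against the total weight, at least `(n + 1) v_n`, as
soon as `a` is a large multiple of `n^{1-α}`. The size-biased part itself misses the largest part
with probability at most about `a / n`.
-/

section PowerSeriesPowers

open Finset PowerSeries

variable {R : Type*} [CommSemiring R] (φ : R⟦X⟧)

theorem coeff_mul_eq_sum_range (ψ : R⟦X⟧) (n : ℕ) :
    coeff n (φ * ψ) = ∑ k ∈ range (n + 1), coeff k φ * coeff (n - k) ψ := by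
  rw [coeff_mul, Nat.sum_antidiagonal_eq_sum_range_succ_mk]

theorem natCast_mul_coeff_pow_succ (N n : ℕ) :
    n * coeff n (φ ^ (N + 1)) =
      (N + 1) * ∑ k ∈ range (n + 1), k * (coeff k φ * coeff (n - k) (φ ^ N)) := by
  cases n with
  | zero => simp
  | succ n =>
    have hderiv : derivative R (φ ^ (N + 1)) = (N + 1 : ℕ) • (derivative R φ * φ ^ N) := by
      rw [derivative_pow, Nat.add_sub_cancel, nsmul_eq_mul]; ring
    have hcoeff := congrArg (coeff n) hderiv
    rw [coeff_derivative, map_nsmul, coeff_mul_eq_sum_range, nsmul_eq_mul] at hcoeff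
    rw [mul_comm, Nat.cast_succ, hcoeff, sum_range_succ' _ (n + 1)]
    simp only [coeff_derivative, Nat.cast_zero, zero_mul, add_zero, Nat.add_sub_add_right,
      Nat.cast_succ]
    congr 1
    exact sum_congr rfl fun k _ => by ring

theorem coeff_trunc_pow_of_lt (N : ℕ) {m n : ℕ} (hn : n < m) :
    (trunc m φ ^ N).coeff n = coeff n (φ ^ N) := by
  rw [← Polynomial.coeff_coe, Polynomial.coe_pow, ← coeff_coe_trunc_of_lt hn, trunc_trunc_pow,
    coeff_coe_trunc_of_lt hn]

theorem coeff_add_pow_succ_of_X_pow_dvd {ψ : R⟦X⟧} {m n : ℕ} (hψ : X ^ m ∣ ψ)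
    (hn : n < 2 * m) (N : ℕ) :
    coeff n ((φ + ψ) ^ (N + 1)) = coeff n (φ ^ (N + 1)) + (N + 1) * coeff n (ψ * φ ^ N) := by
  obtain ⟨c, hc⟩ := Polynomial.powAddExpansion φ ψ (N + 1)
  have hdvd : X ^ (2 * m) ∣ c * ψ ^ 2 := by
    rw [mul_comm 2, pow_mul]
    exact (pow_dvd_pow_of_dvd hψ 2).mul_left c
  have hlin : ((N + 1 : ℕ) : R⟦X⟧) * φ ^ N * ψ = (N + 1) • (ψ * φ ^ N) := by
    rw [nsmul_eq_mul]; ring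
  rw [hc, Nat.add_sub_cancel, hlin, map_add, map_add, X_pow_dvd_iff.1 hdvd n hn, map_nsmul,
    nsmul_eq_mul, add_zero, Nat.cast_succ]

/-- The principle of one big jump: two summands of size at least `m` are too many. -/
theorem coeff_pow_succ_eq_trunc (N : ℕ) {m n : ℕ} (hn : n < 2 * m) :
    coeff n (φ ^ (N + 1)) = (trunc m φ ^ (N + 1)).coeff n +
      (N + 1) * ∑ k ∈ Ico m (n + 1), coeff k φ * coeff (n - k) (φ ^ N) := by
  set tail : R⟦X⟧ := X ^ m * .mk fun i => coeff (i + m) φ with htail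
  have hsplit : φ = trunc m φ + tail := (eq_X_pow_mul_shift_add_trunc m φ).trans (add_comm _ _)
  have hdvd : X ^ m ∣ tail := dvd_mul_right _ _
  have hcoeff_tail (k : ℕ) : coeff k tail = if m ≤ k then coeff k φ else 0 := by
    rw [htail, coeff_X_pow_mul']
    split_ifs with hk
    · rw [coeff_mk, Nat.sub_add_cancel hk]
    · rfl
  have hfilter : {k ∈ range (n + 1) | m ≤ k} = Ico m (n + 1) := by
    ext k; simp [and_comm]
  conv_lhs =>
    rw [hsplit, coeff_add_pow_succ_of_X_pow_dvd _ hdvd hn, ← Polynomial.coe_pow,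
      Polynomial.coeff_coe, coeff_mul_eq_sum_range]
  simp only [hcoeff_tail, ite_mul, zero_mul, ← sum_filter, hfilter]
  congr 2
  refine sum_congr rfl fun k hk => ?_
  rw [mem_Ico] at hk
  rw [← Polynomial.coe_pow, Polynomial.coeff_coe, coeff_trunc_pow_of_lt φ N (by omega)]

end PowerSeriesPowers

section Positivity

open Finset PowerSeries
open scoped Polynomial

theorem coeff_trunc_nonneg {R : Type*} [Semiring R] [Preorder R] {φ : R⟦X⟧}
    (hφ : ∀ k, 0 ≤ coeff k φ) (m i : ℕ) : 0 ≤ (trunc m φ).coeff i := by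
  rw [coeff_trunc]
  split_ifs
  exacts [hφ i, le_rfl]

variable {R : Type*} [CommSemiring R] [PartialOrder R] [IsOrderedRing R] {φ : R⟦X⟧}

theorem coeff_pow_nonneg (hφ : ∀ k, 0 ≤ coeff k φ) (N n : ℕ) : 0 ≤ coeff n (φ ^ N) := by
  classical
  rw [coeff_pow]
  exact sum_nonneg fun _ _ => prod_nonneg fun _ _ => hφ _

theorem polynomial_coeff_pow_nonneg {p : R[X]} (hp : ∀ i, 0 ≤ p.coeff i) (N n : ℕ) :
    0 ≤ (p ^ N).coeff n := by
  rw [← Polynomial.coeff_coe, Polynomial.coe_pow]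
  exact coeff_pow_nonneg (fun i => (Polynomial.coeff_coe p i).symm ▸ hp i) N n

theorem coeff_mul_pow_le_eval {p : R[X]} (hp : ∀ i, 0 ≤ p.coeff i) {x : R} (hx : 0 ≤ x) (i : ℕ) :
    p.coeff i * x ^ i ≤ p.eval x := by
  rw [Polynomial.eval_eq_sum_range' (Nat.lt_succ_of_le (le_max_left p.natDegree i))]
  exact single_le_sum (f := fun i => p.coeff i * x ^ i)
    (fun j _ => mul_nonneg (hp j) (pow_nonneg hx j))
    (mem_range.2 (Nat.lt_succ_of_le (le_max_right _ _)))

/-- The Chernoff bound for the coefficients of a power. -/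
theorem mul_coeff_pow_le_of_le_mul_pow {p : R[X]} (hp : ∀ i, 0 ≤ p.coeff i) {a c r x : R}
    (hc : 0 ≤ c) (hr : 0 ≤ r) (hx : 0 ≤ x) {i : ℕ} (ha : a ≤ c * (r * x) ^ i) (N : ℕ) :
    a * (p ^ N).coeff i ≤ c * r ^ i * p.eval x ^ N := by
  calc a * (p ^ N).coeff i ≤ c * (r * x) ^ i * (p ^ N).coeff i := by
        gcongr; exact polynomial_coeff_pow_nonneg hp N i
    _ = c * r ^ i * ((p ^ N).coeff i * x ^ i) := by ring
    _ ≤ c * r ^ i * (p ^ N).eval x := by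
        gcongr; exact coeff_mul_pow_le_eval (polynomial_coeff_pow_nonneg hp N) hx i
    _ = c * r ^ i * p.eval x ^ N := by rw [Polynomial.eval_pow]

theorem one_le_eval_trunc_succ (hφ : ∀ k, 0 ≤ coeff k φ) (hφ0 : coeff 0 φ = 1) (m : ℕ) {x : R}
    (hx : 0 ≤ x) : 1 ≤ (trunc (m + 1) φ).eval x := by
  have h := coeff_mul_pow_le_eval (coeff_trunc_nonneg hφ (m + 1)) hx 0
  rwa [coeff_trunc, if_pos m.succ_pos, hφ0, pow_zero, one_mul] at h

theorem succ_mul_coeff_le_coeff_pow_succ (hφ : ∀ k, 0 ≤ coeff k φ) (hφ0 : coeff 0 φ = 1) (N : ℕ)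
    {n : ℕ} (hn : n ≠ 0) : (N + 1) * coeff n φ ≤ coeff n (φ ^ (N + 1)) := by
  have hφ0' : constantCoeff φ = 1 := by rwa [← coeff_zero_eq_constantCoeff_apply]
  have hlast : ∑ k ∈ Ico n (n + 1), coeff k φ * coeff (n - k) (φ ^ N) = coeff n φ := by
    simp [hφ0']
  rw [coeff_pow_succ_eq_trunc φ N (m := n) (by omega), hlast]
  exact le_add_of_nonneg_left
    (polynomial_coeff_pow_nonneg (coeff_trunc_nonneg hφ n) (N + 1) n)

end Positivity

open Finset in
/-- A term with `n - a ≤ k` uses up `(n - a) * t k` of the total `n * S`, so that little is left for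
the other terms if most of `S` comes from these. -/
theorem sum_filter_natCast_mul_le {R : Type*} [CommRing R] [LinearOrder R] [IsStrictOrderedRing R]
    {t : ℕ → R} (ht : ∀ k, 0 ≤ t k) {n m : ℕ} {S J a : R} (hJ : 0 ≤ J) (ha : 0 ≤ a)
    (hsum : n * S = ∑ k ∈ range (n + 1), k * t k)
    (hsplit : S = J + ∑ k ∈ Ico m (n + 1), t k) :
    ∑ k ∈ range (n + 1) with a < n - (k : ℕ), k * t k ≤
      a * S + n * (J + ∑ k ∈ Ico m (n + 1) with a < n - (k : ℕ), t k) := by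
  have hgood : (n - a) * ∑ k ∈ Ico m (n + 1) with ¬a < n - (k : ℕ), t k ≤
      ∑ k ∈ range (n + 1) with ¬a < n - (k : ℕ), k * t k := by
    rw [mul_sum]
    refine (sum_le_sum fun k hk => ?_).trans (sum_le_sum_of_subset_of_nonneg
      (filter_subset_filter _ fun k hk => ?_) fun k _ _ => mul_nonneg k.cast_nonneg (ht k))
    · have hk := (mem_filter.1 hk).2
      exact mul_le_mul_of_nonneg_right (by linarith) (ht k)
    · exact mem_range.2 (mem_Ico.1 hk).2
  have hbad : 0 ≤ ∑ k ∈ Ico m (n + 1) with a < n - (k : ℕ), t k :=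
    sum_nonneg fun k _ => ht k
  rw [← sum_filter_add_sum_filter_not _ fun k : ℕ => a < n - k] at hsum hsplit
  subst hsplit
  linarith [mul_nonneg ha hJ, mul_nonneg ha hbad]

theorem tsum_subtype_eq_sum {ι M : Type*} [AddCommMonoid M] [TopologicalSpace M] {p : ι → Prop}
    (s : Finset ι) (hs : ∀ i, i ∈ s ↔ p i) (f : ι → M) : ∑' i : {i // p i}, f i = ∑ i ∈ s, f i := by
  let : Fintype {i // p i} := Fintype.subtype s hs
  rw [tsum_fintype, ← Finset.sum_subtype s hs]

namespace PTree

open Finset PowerSeries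

/-- The number of vertices of a forest, encoded as the list of its trees. -/
def forestSize (l : List PTree) : ℕ := (l.map size).sum

/-- The weight of a forest, the product of the weights of its trees. -/
noncomputable def forestWeight (w : ℕ → ℝ) (l : List PTree) : ℝ := (l.map (weight w)).prod

theorem size_node (ts : List PTree) : (node ts).size = 1 + forestSize ts := by
  rw [size, List.attach_map_val (f := size), forestSize]

theorem weight_node (w : ℕ → ℝ) (ts : List PTree) :
    (node ts).weight w = w (ts.length + 1) * forestWeight w ts := by
  rw [weight, List.attach_map_val (f := weight w), forestWeight]

theorem length_le_forestSize (l : List PTree) : l.length ≤ forestSize l := by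
  induction l with
  | nil => simp
  | cons t l ih =>
    obtain ⟨ts⟩ := t
    simp only [forestSize, List.map_cons, List.sum_cons, List.length_cons, size_node] at *
    omega

/-- The forest obtained from `l` by joining its first `d` trees to a new root. Removing the root of
the first tree of a forest is the inverse operation; it turns a forest with `k + 1` trees and
`n + 1` vertices into one with `k + d` trees and `n` vertices. -/
def graft (d : ℕ) (l : List PTree) : List PTree := node (l.take d) :: l.drop d

theorem forestSize_graft (d : ℕ) (l : List PTree) : forestSize (graft d l) = forestSize l + 1 := by
  nth_rw 2 [← List.take_append_drop d l]
  simp only [forestSize, graft, List.map_cons, List.sum_cons, size_node, List.map_append,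
    List.sum_append]
  ring

theorem forestWeight_graft (w : ℕ → ℝ) {d : ℕ} {l : List PTree} (hd : d ≤ l.length) :
    forestWeight w (graft d l) = w (d + 1) * forestWeight w l := by
  nth_rw 2 [← List.take_append_drop d l]
  simp only [forestWeight, graft, List.map_cons, List.prod_cons, weight_node, List.map_append,
    List.prod_append, List.length_take, min_eq_left hd]
  ring

theorem graft_inj {d e : ℕ} {l l' : List PTree} (hd : d ≤ l.length) (he : e ≤ l'.length)
    (h : graft d l = graft e l') : d = e ∧ l = l' := by
  obtain ⟨htake, hdrop⟩ : l.take d = l'.take e ∧ l.drop d = l'.drop e := by simpa [graft] using h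
  have hlen := congrArg List.length htake
  rw [List.length_take, List.length_take, min_eq_left hd, min_eq_left he] at hlen
  exact ⟨hlen, by rw [← List.take_append_drop d l, htake, hdrop, List.take_append_drop]⟩

theorem graft_length_append (ts l : List PTree) : graft ts.length (ts ++ l) = node ts :: l := by
  simp [graft]

open Classical in
/-- The forests with `n` vertices and `k` trees. -/
noncomputable def forests : ℕ → ℕ → Finset (List PTree)
  | 0, 0 => {[]}
  | 0, _ + 1 => ∅
  | _ + 1, 0 => ∅
  | n + 1, k + 1 =>
    ((range (n + 1 - k)).sigma fun d => forests n (k + d)).image fun p => graft p.1 p.2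

theorem mem_forests {n k : ℕ} {l : List PTree} :
    l ∈ forests n k ↔ forestSize l = n ∧ l.length = k := by
  have hlen := length_le_forestSize l
  induction n generalizing k l with
  | zero =>
    cases k with
    | zero =>
      simp only [forests, mem_singleton, List.length_eq_zero_iff, iff_and_self]
      rintro rfl
      rfl
    | succ k => simp only [forests, notMem_empty, false_iff]; omega
  | succ n ih =>
    cases k with
    | zero =>
      simp only [forests, notMem_empty, false_iff, List.length_eq_zero_iff]
      rintro ⟨hsize, rfl⟩
      simp [forestSize] at hsize
    | succ k =>
      simp only [forests, mem_image, mem_sigma, mem_range, Sigma.exists]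
      constructor
      · rintro ⟨d, l, ⟨-, hl⟩, rfl⟩
        obtain ⟨hsize, hlength⟩ := (ih (length_le_forestSize l)).1 hl
        exact ⟨by rw [forestSize_graft, hsize], by simp [graft, hlength]⟩
      · rintro ⟨hsize, hlength⟩
        obtain ⟨⟨ts⟩, l, rfl⟩ := List.exists_cons_of_length_eq_add_one hlength
        have hrest := length_le_forestSize (ts ++ l)
        rw [← graft_length_append, forestSize_graft, Nat.add_right_cancel_iff] at hsize
        rw [List.length_cons, Nat.add_right_cancel_iff] at hlength
        have happend : (ts ++ l).length = k + ts.length := by simp [hlength, add_comm]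
        exact ⟨ts.length, ts ++ l, ⟨by omega, (ih hrest).2 ⟨hsize, happend⟩⟩,
          graft_length_append ts l⟩

/-- The total weight of the forests with `n` vertices and `k` trees. -/
noncomputable def forestSum (w : ℕ → ℝ) (n k : ℕ) : ℝ := ∑ l ∈ forests n k, forestWeight w l

@[simp]
theorem forestSum_zero_zero (w : ℕ → ℝ) : forestSum w 0 0 = 1 := by
  simp [forestSum, forests, forestWeight]

@[simp]
theorem forestSum_succ_zero (w : ℕ → ℝ) (n : ℕ) : forestSum w (n + 1) 0 = 0 := by
  simp [forestSum, forests]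

theorem forestSum_succ_succ (w : ℕ → ℝ) (n k : ℕ) :
    forestSum w (n + 1) (k + 1) =
      ∑ d ∈ range (n + 1 - k), w (d + 1) * forestSum w n (k + d) := by
  have hlength {d : ℕ} {l : List PTree} (hl : l ∈ forests n (k + d)) : d ≤ l.length := by
    rw [mem_forests] at hl; omega
  classical
  rw [forestSum, forests, sum_image, sum_sigma]
  · simp only [forestSum, mul_sum]
    exact sum_congr rfl fun d _ => sum_congr rfl fun l hl => forestWeight_graft w (hlength hl)
  · rintro ⟨d, l⟩ hl ⟨e, l'⟩ hl' heq
    obtain ⟨rfl, rfl⟩ := graft_inj (hlength (mem_sigma.1 hl).2) (hlength (mem_sigma.1 hl').2) heq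
    rfl

/-- The generating function `∑ w_{d+1} x^d` of the weights in terms of the outdegree `d`. -/
noncomputable def outdegSeries (w : ℕ → ℝ) : ℝ⟦X⟧ := .mk fun d => w (d + 1)

@[simp]
theorem coeff_outdegSeries (w : ℕ → ℝ) (d : ℕ) : coeff d (outdegSeries w) = w (d + 1) :=
  coeff_mk _ _

/-- The cycle lemma, or Lagrange inversion for the generating function of the trees. -/
theorem natCast_mul_forestSum (w : ℕ → ℝ) {n k : ℕ} (hk : k ≤ n) :
    n * forestSum w n k = k * coeff (n - k) (outdegSeries w ^ n) := by
  set φ := outdegSeries w with hφ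
  induction n generalizing k with
  | zero => simp [Nat.le_zero.1 hk]
  | succ n ih =>
    obtain _ | k := k
    · simp
    obtain rfl | hn := eq_or_ne n 0
    · obtain rfl : k = 0 := by omega
      simp [forestSum_succ_succ, hφ]
    obtain ⟨q, rfl⟩ := Nat.exists_eq_add_of_le (Nat.le_of_succ_le_succ hk)
    have hrec : ((k + q : ℕ) : ℝ) * forestSum w (k + q + 1) (k + 1) =
        k * coeff q (φ ^ (k + q + 1)) +
          ∑ d ∈ range (q + 1), d * (coeff d φ * coeff (q - d) (φ ^ (k + q))) := by
      rw [forestSum_succ_succ, pow_succ', coeff_mul_eq_sum_range, mul_sum, mul_sum,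
        ← sum_add_distrib, show k + q + 1 - k = q + 1 by omega]
      refine sum_congr rfl fun d hd => ?_
      have hih := ih (k := k + d) (by rw [mem_range] at hd; omega)
      rw [Nat.add_sub_add_left] at hih
      rw [hφ, coeff_outdegSeries, ← hφ]
      push_cast at hih ⊢
      linear_combination w (d + 1) * hih
    have hderiv := natCast_mul_coeff_pow_succ φ (k + q) q
    rw [show k + q + 1 - (k + 1) = q by omega]
    refine mul_left_cancel₀ (Nat.cast_ne_zero.2 hn : ((k + q : ℕ) : ℝ) ≠ 0) ?_
    push_cast at hrec hderiv ⊢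
    linear_combination (k + q + 1 : ℝ) * hrec - hderiv

open Classical in
/-- The trees with `n` edges, that is, with `n + 1` vertices. -/
noncomputable def treesWithEdges (n : ℕ) : Finset PTree :=
  ((range (n + 1)).sigma (forests n)).image fun p => node p.2

theorem mem_treesWithEdges {n : ℕ} {t : PTree} : t ∈ treesWithEdges n ↔ t.size = n + 1 := by
  obtain ⟨ts⟩ := t
  have hlen := length_le_forestSize ts
  simp only [treesWithEdges, mem_image, mem_sigma, mem_range, mem_forests, Sigma.exists,
    node.injEq, size_node]
  constructor
  · rintro ⟨k, l, ⟨-, hl, -⟩, rfl⟩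
    omega
  · exact fun h => ⟨ts.length, ts, ⟨by omega, by omega, rfl⟩, rfl⟩

theorem sum_weight_treesWithEdges (w : ℕ → ℝ) (n : ℕ) (P : ℕ → Prop) [DecidablePred P] :
    ∑ t ∈ treesWithEdges n with P t.children.length, t.weight w =
      ∑ k ∈ range (n + 1) with P k, w (k + 1) * forestSum w n k := by
  classical
  rw [sum_filter, sum_filter, treesWithEdges, sum_image, sum_sigma]
  · refine sum_congr rfl fun k _ => ?_
    have hnode (l : List PTree) (hl : l ∈ forests n k) :
        (if P l.length then (node l).weight w else 0) =
          if P k then w (k + 1) * forestWeight w l else 0 := by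
      rw [weight_node, (mem_forests.1 hl).2]
    refine (sum_congr rfl hnode).trans ?_
    split_ifs
    · rw [forestSum, mul_sum]
    · exact sum_const_zero
  · rintro ⟨k, l⟩ hl ⟨k', l'⟩ hl' heq
    simp only [coe_sigma, Set.mem_sigma_iff, mem_coe, mem_forests] at hl hl'
    obtain rfl : l = l' := by simpa using heq
    obtain rfl : k = k' := hl.2.2.symm.trans hl'.2.2
    rfl

theorem add_one_mul_Zfun_succ (w : ℕ → ℝ) (n : ℕ) :
    (n + 1) * Zfun w (n + 1) = coeff n (outdegSeries w ^ (n + 1)) := by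
  have h := natCast_mul_forestSum w (Nat.le_add_left 1 n)
  have hsum := sum_weight_treesWithEdges w n fun _ => True
  rw [forestSum_succ_succ] at h
  rw [Zfun, tsum_subtype_eq_sum _ fun _ => mem_treesWithEdges]
  simp only [Nat.cast_add, Nat.cast_one, tsub_zero, zero_add, add_tsub_cancel_right, one_mul,
    filter_true] at h hsum
  rw [hsum, h]

theorem nu_outdeg_eq (w : ℕ → ℝ) {n : ℕ} (hn : n ≠ 0) (P : ℕ → Prop) [DecidablePred P] :
    nu w (n + 1) (fun t => P t.children.length) =
      (n + 1) * (∑ k ∈ range (n + 1) with P k,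
        k * (coeff k (outdegSeries w) * coeff (n - k) (outdegSeries w ^ n))) /
      (n * coeff n (outdegSeries w ^ (n + 1))) := by
  have hn' : (n : ℝ) ≠ 0 := Nat.cast_ne_zero.2 hn
  have hmem (t : PTree) : t ∈ {t ∈ treesWithEdges n | P t.children.length} ↔
      t.size = n + 1 ∧ P t.children.length := by rw [mem_filter, mem_treesWithEdges]
  have hsum : ∑ k ∈ range (n + 1) with P k,
        k * (coeff k (outdegSeries w) * coeff (n - k) (outdegSeries w ^ n)) =
      n * ∑ k ∈ range (n + 1) with P k, w (k + 1) * forestSum w n k := by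
    rw [mul_sum]
    refine sum_congr rfl fun k hk => ?_
    have hcycle := natCast_mul_forestSum w (Nat.lt_succ_iff.1 (mem_range.1 (mem_filter.1 hk).1))
    rw [coeff_outdegSeries]
    linear_combination -w (k + 1) * hcycle
  rw [nu, tsum_subtype_eq_sum _ hmem, sum_weight_treesWithEdges, hsum, ← add_one_mul_Zfun_succ]
  field_simp

end PTree

section SizeBiased

open Finset PowerSeries

variable {φ : ℝ⟦X⟧}

theorem coeff_trunc_pow_add_sum_le (hφ : ∀ k, 0 ≤ coeff k φ) (hφ0 : coeff 0 φ = 1) {n : ℕ}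
    {x r a : ℝ} (hx : 0 ≤ x) (hr : 0 < r) (hr1 : r ≤ 1) (han : a ≤ n)
    (hexp : ∀ k ≤ n, coeff k φ ≤ coeff n φ * (r * x) ^ (n - k)) :
    (trunc (n / 2 + 1) φ ^ (n + 1)).coeff n +
        (n + 1) * ∑ k ∈ Ico (n / 2 + 1) (n + 1) with a < n - (k : ℕ),
          coeff k φ * coeff (n - k) (φ ^ n) ≤
      (n + 1) ^ 2 * (coeff n φ * (r ^ a * (trunc (n / 2 + 1) φ).eval x ^ (n + 1))) := by
  set p := trunc (n / 2 + 1) φ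
  set E := coeff n φ * (r ^ a * p.eval x ^ (n + 1)) with hE
  have hp : ∀ i, 0 ≤ p.coeff i := coeff_trunc_nonneg hφ _
  have hone : 1 ≤ p.eval x := one_le_eval_trunc_succ hφ hφ0 _ hx
  have hchernoff {i N : ℕ} (hai : a ≤ i) (hN : N ≤ n + 1) :
      coeff n φ * r ^ i * p.eval x ^ N ≤ E := by
    have hr_pow : r ^ i ≤ r ^ a := by
      rw [← Real.rpow_natCast]
      exact Real.rpow_le_rpow_of_exponent_ge hr hr1 hai
    have hφn := hφ n
    rw [hE, mul_assoc]
    gcongr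
  have hJ : (p ^ (n + 1)).coeff n ≤ E := by
    have h := mul_coeff_pow_le_of_le_mul_pow hp (hφ n) hr.le hx (hexp 0 n.zero_le) (n + 1)
    rw [hφ0, one_mul] at h
    exact h.trans (hchernoff han le_rfl)
  have hterm : ∀ k ∈ {k ∈ Ico (n / 2 + 1) (n + 1) | a < n - (k : ℕ)},
      coeff k φ * coeff (n - k) (φ ^ n) ≤ E := by
    intro k hk
    obtain ⟨⟨hmk, hkn⟩, hak⟩ := by simpa only [mem_filter, mem_Ico] using hk
    have hkn : k ≤ n := Nat.le_of_lt_succ hkn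
    rw [← coeff_trunc_pow_of_lt φ n (show n - k < n / 2 + 1 by omega)]
    exact (mul_coeff_pow_le_of_le_mul_pow hp (hφ n) hr.le hx (hexp k hkn) n).trans
      (hchernoff (by rw [Nat.cast_sub hkn]; exact hak.le) n.le_succ)
  have hcard : (#{k ∈ Ico (n / 2 + 1) (n + 1) | a < n - (k : ℕ)} : ℝ) ≤ n := by
    refine Nat.cast_le.2 ((card_filter_le _ _).trans ?_)
    rw [Nat.card_Ico]; omega
  have hE0 : 0 ≤ E := (polynomial_coeff_pow_nonneg hp _ _).trans hJ
  have hsum := (sum_le_card_nsmul _ _ _ hterm).trans_eq (nsmul_eq_mul _ _)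
  calc _ ≤ E + (n + 1) * (n * E) := by gcongr; exact hsum.trans (by gcongr)
    _ ≤ (n + 1) ^ 2 * E := by nlinarith [n.cast_nonneg (α := ℝ)]

theorem size_biased_tail_le (hφ : ∀ k, 0 ≤ coeff k φ) (hφ0 : coeff 0 φ = 1) {n : ℕ} (hn : n ≠ 0)
    {x r a : ℝ} (hx : 0 ≤ x) (hr : 0 < r) (hr1 : r ≤ 1) (ha : 0 ≤ a)
    (hexp : ∀ k ≤ n, coeff k φ ≤ coeff n φ * (r * x) ^ (n - k)) :
    (n + 1) * (∑ k ∈ range (n + 1) with a < n - (k : ℕ),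
        k * (coeff k φ * coeff (n - k) (φ ^ n))) / (n * coeff n (φ ^ (n + 1))) ≤
      a / n + (n + 1) * (r ^ a * (trunc (n / 2 + 1) φ).eval x ^ (n + 1)) := by
  set S := coeff n (φ ^ (n + 1))
  set F := r ^ a * (trunc (n / 2 + 1) φ).eval x ^ (n + 1)
  have hF : 0 ≤ F := by
    have := zero_le_one.trans (one_le_eval_trunc_succ hφ hφ0 (n / 2) hx)
    positivity
  obtain hna | han := lt_or_ge (n : ℝ) a
  · have hempty (k : ℕ) : ¬a < n - (k : ℝ) := by linarith [k.cast_nonneg (α := ℝ)]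
    simp only [hempty, filter_false, sum_empty, mul_zero, zero_div]
    positivity
  have hφn : 0 < coeff n φ := by
    refine pos_of_mul_pos_left (zero_lt_one.trans_le ?_) (pow_nonneg (mul_nonneg hr.le hx) n)
    simpa only [hφ0, Nat.sub_zero] using hexp 0 n.zero_le
  have hS : (n + 1) * coeff n φ ≤ S := succ_mul_coeff_le_coeff_pow_succ hφ hφ0 n hn
  have hbiased := sum_filter_natCast_mul_le (S := S) (a := a) (m := n / 2 + 1)
    (t := fun k => (n + 1) * (coeff k φ * coeff (n - k) (φ ^ n)))
    (fun k => mul_nonneg (by positivity) (mul_nonneg (hφ k) (coeff_pow_nonneg hφ _ _)))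
    (polynomial_coeff_pow_nonneg (coeff_trunc_nonneg hφ _) (n + 1) n) ha
    (by rw [natCast_mul_coeff_pow_succ, mul_sum]; exact sum_congr rfl fun k _ => by ring)
    (by rw [← mul_sum]; exact coeff_pow_succ_eq_trunc φ n (by omega))
  have hbad := coeff_trunc_pow_add_sum_le hφ hφ0 hx hr hr1 han hexp
  have : (0 : ℝ) < n := Nat.cast_pos.2 (Nat.pos_of_ne_zero hn)
  have hS0 : 0 < S := lt_of_lt_of_le (by positivity) hS
  rw [div_le_iff₀ (by positivity)]
  simp only [mul_left_comm _ ((n : ℝ) + 1), ← mul_sum] at hbiased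
  calc _ ≤ a * S + n * ((n + 1) ^ 2 * (coeff n φ * F)) := hbiased.trans (by gcongr)
    _ = a * S + n * ((n + 1) * F * ((n + 1) * coeff n φ)) := by ring
    _ ≤ a * S + n * ((n + 1) * F * S) := by gcongr
    _ = _ := by field_simp

end SizeBiased

open Finset PowerSeries in
theorem nu_lt_sub_length_le {w : ℕ → ℝ} (hw : ∀ n, 0 ≤ w n) (hw1 : w 1 = 1) {n : ℕ} (hn : n ≠ 0)
    {x r a : ℝ} (hx : 0 ≤ x) (hr : 0 < r) (hr1 : r ≤ 1) (ha : 0 ≤ a)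
    (hexp : ∀ k ≤ n, w (k + 1) ≤ w (n + 1) * (r * x) ^ (n - k)) :
    nu w (n + 1) (fun t => a < n - (t.children.length : ℝ)) ≤
      a / n + (n + 1) * (r ^ a * (trunc (n / 2 + 1) (PTree.outdegSeries w)).eval x ^ (n + 1)) := by
  rw [PTree.nu_outdeg_eq w hn fun k => a < n - (k : ℝ)]
  refine size_biased_tail_le (fun k => ?_) ?_ hn hx hr hr1 ha fun k hk => ?_
  · exact (PTree.coeff_outdegSeries w k).symm ▸ hw _
  · exact (PTree.coeff_outdegSeries w 0).trans hw1
  · simpa only [PTree.coeff_outdegSeries] using hexp k hk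

section FactorialWeights

open Finset PowerSeries Real
open scoped Nat

theorem add_one_pow_le_exp_one_mul_pow {m n : ℕ} (h : m ≤ n) :
    ((n : ℝ) + 1) ^ m ≤ exp 1 * (n : ℝ) ^ m := by
  obtain rfl | hn := n.eq_zero_or_pos
  · simp [Nat.le_zero.1 h]
  have hn' : (0 : ℝ) < n := Nat.cast_pos.2 hn
  calc ((n : ℝ) + 1) ^ m = ((n : ℝ)⁻¹ + 1) ^ m * (n : ℝ) ^ m := by
        rw [← mul_pow, add_mul, inv_mul_cancel₀ hn'.ne', one_mul, add_comm]
    _ ≤ exp (n : ℝ)⁻¹ ^ m * (n : ℝ) ^ m := by gcongr; exact add_one_le_exp _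
    _ = exp (m / n) * (n : ℝ) ^ m := by rw [← exp_nat_mul, div_eq_mul_inv]
    _ ≤ exp 1 * (n : ℝ) ^ m := by
        gcongr; exact div_le_one_of_le₀ (Nat.cast_le.2 h) hn'.le

theorem factorial_mul_add_pow_le (k m : ℕ) :
    (k ! : ℝ) * ((k + m : ℕ) : ℝ) ^ m ≤ exp 1 ^ m * ((k + m)! : ℝ) := by
  induction m with
  | zero => simp
  | succ m ih =>
    set n := k + m with hn
    calc (k ! : ℝ) * ((k + (m + 1) : ℕ) : ℝ) ^ (m + 1)
        = k ! * (n + 1) ^ m * (n + 1) := by rw [← add_assoc, ← hn]; push_cast; ring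
      _ ≤ k ! * (exp 1 * (n : ℝ) ^ m) * (n + 1) := by
          gcongr; exact add_one_pow_le_exp_one_mul_pow (Nat.le_add_left m k)
      _ = exp 1 * (k ! * (n : ℝ) ^ m) * (n + 1) := by ring
      _ ≤ exp 1 * (exp 1 ^ m * n !) * (n + 1) := by gcongr
      _ = exp 1 ^ (m + 1) * ((k + (m + 1))! : ℝ) := by
          rw [← add_assoc, ← hn, Nat.factorial_succ]; push_cast; ring

theorem factorial_le_div_pow {k n : ℕ} (hk : k ≤ n) (hn : n ≠ 0) :
    (k ! : ℝ) ≤ n ! * (exp 1 / n) ^ (n - k) := by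
  obtain ⟨m, rfl⟩ := Nat.exists_eq_add_of_le hk
  have : (0 : ℝ) < (k + m : ℕ) := Nat.cast_pos.2 (Nat.pos_of_ne_zero hn)
  rw [Nat.add_sub_cancel_left, div_pow, mul_div_assoc', le_div_iff₀ (by positivity),
    mul_comm (_ ! : ℝ) (exp 1 ^ m)]
  exact factorial_mul_add_pow_le k m

theorem two_mul_pow_le_add_one_pow {n : ℕ} (hn : n ≠ 0) : 2 * (n : ℝ) ^ n ≤ (n + 1) ^ n := by
  have hn' : (0 : ℝ) < n := Nat.cast_pos.2 (Nat.pos_of_ne_zero hn)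
  have hbernoulli := one_add_mul_le_pow (by linarith [inv_pos.2 hn'] : -2 ≤ (n : ℝ)⁻¹) n
  rw [mul_inv_cancel₀ hn'.ne', one_add_one_eq_two] at hbernoulli
  calc 2 * (n : ℝ) ^ n ≤ (1 + (n : ℝ)⁻¹) ^ n * (n : ℝ) ^ n := by gcongr
    _ = (n + 1) ^ n := by rw [← mul_pow, add_mul, inv_mul_cancel₀ hn'.ne', one_mul]

theorem factorial_le_add_one_div_two_pow (n : ℕ) : (n ! : ℝ) ≤ (((n : ℝ) + 1) / 2) ^ n := by
  induction n with
  | zero => simp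
  | succ n ih =>
    calc ((n + 1)! : ℝ) = (n + 1) * n ! := by rw [Nat.factorial_succ]; push_cast; rfl
      _ ≤ (n + 1) * (((n : ℝ) + 1) / 2) ^ n := by gcongr
      _ = 2 * ((n + 1 : ℕ) : ℝ) ^ (n + 1) / 2 ^ (n + 1) := by
          rw [div_pow]; push_cast; field_simp; ring
      _ ≤ (((n + 1 : ℕ) : ℝ) + 1) ^ (n + 1) / 2 ^ (n + 1) := by
          gcongr; exact two_mul_pow_le_add_one_pow n.succ_ne_zero
      _ = _ := (div_pow _ _ _).symm

theorem factorial_succ_mul_pow_le {j n : ℕ} (h : 2 * (j + 1) ≤ n) :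
    ((j + 1)! : ℝ) * (3 / n) ^ (j + 1) ≤ 3 / n * ((j + 1) * (3 / 4) ^ j) := by
  have hn : (0 : ℝ) < n := Nat.cast_pos.2 (by omega)
  have hj : 2 * ((j : ℝ) + 1) ≤ n := by exact_mod_cast h
  calc ((j + 1)! : ℝ) * (3 / n) ^ (j + 1)
      = 3 / n * ((j + 1) * (j ! * (3 / n) ^ j)) := by
        rw [Nat.factorial_succ]; push_cast; ring
    _ ≤ 3 / n * ((j + 1) * ((((j : ℝ) + 1) / 2) ^ j * (3 / n) ^ j)) := by
        gcongr; exact factorial_le_add_one_div_two_pow j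
    _ ≤ 3 / n * ((j + 1) * (3 / 4) ^ j) := by
        rw [← mul_pow]
        gcongr
        rw [div_mul_div_comm, div_le_div_iff₀ (by positivity) (by norm_num)]
        linarith

/-- The weights `w_n = ((n - 1)!)^α`. -/
noncomputable def factorialWeight (α : ℝ) (n : ℕ) : ℝ := ((n - 1)! : ℝ) ^ α

variable {α : ℝ}

theorem factorialWeight_nonneg (α : ℝ) (n : ℕ) : 0 ≤ factorialWeight α n :=
  rpow_nonneg (Nat.cast_nonneg _) α

theorem factorialWeight_add_one (α : ℝ) (n : ℕ) : factorialWeight α (n + 1) = (n ! : ℝ) ^ α := rfl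

theorem factorialWeight_le_mul_pow (hα : 0 ≤ α) {k n : ℕ} (hk : k ≤ n) (hn : n ≠ 0) :
    factorialWeight α (k + 1) ≤
      factorialWeight α (n + 1) * ((exp 1 / 3) ^ α * (3 / n) ^ α) ^ (n - k) := by
  have : (0 : ℝ) < n := Nat.cast_pos.2 (Nat.pos_of_ne_zero hn)
  rw [factorialWeight_add_one, factorialWeight_add_one,
    ← mul_rpow (by positivity) (by positivity), div_mul_div_cancel₀ (by norm_num),
    rpow_pow_comm (by positivity), ← mul_rpow (by positivity) (by positivity)]
  exact rpow_le_rpow (by positivity) (factorial_le_div_pow hk hn) hα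

theorem factorialWeight_mul_rpow_pow_le (hα : 0 ≤ α) (hα1 : α ≤ 1) {j n : ℕ}
    (h : 2 * (j + 1) ≤ n) :
    factorialWeight α (j + 2) * ((3 / n) ^ α) ^ (j + 1) ≤
      (3 / n) ^ α * ((j + 1) * ((3 / 4) ^ α) ^ j) := by
  have hj : ((j : ℝ) + 1) ^ α ≤ j + 1 := by
    simpa using rpow_le_rpow_of_exponent_le (by simp : 1 ≤ (j : ℝ) + 1) hα1
  calc factorialWeight α (j + 2) * ((3 / n) ^ α) ^ (j + 1)
      = (((j + 1)! : ℝ) * (3 / n) ^ (j + 1)) ^ α := by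
        rw [factorialWeight_add_one, rpow_pow_comm (by positivity),
          mul_rpow (by positivity) (by positivity)]
    _ ≤ (3 / n * ((j + 1) * (3 / 4) ^ j)) ^ α :=
        rpow_le_rpow (by positivity) (factorial_succ_mul_pow_le h) hα
    _ = (3 / n) ^ α * (((j : ℝ) + 1) ^ α * ((3 / 4) ^ α) ^ j) := by
        rw [rpow_pow_comm (by norm_num), mul_rpow (by positivity) (by positivity),
          mul_rpow (by positivity) (by positivity)]
    _ ≤ (3 / n) ^ α * ((j + 1) * ((3 / 4) ^ α) ^ j) := by gcongr

theorem sum_add_one_mul_pow_le {ρ : ℝ} (h0 : 0 ≤ ρ) (h1 : ρ < 1) (n : ℕ) :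
    ∑ j ∈ range n, ((j : ℝ) + 1) * ρ ^ j ≤ 1 / (1 - ρ) ^ 2 := by
  have hsum := hasSum_choose_mul_geometric_of_norm_lt_one 1 (by rwa [norm_of_nonneg h0] : ‖ρ‖ < 1)
  simp only [Nat.choose_one_right, Nat.cast_add, Nat.cast_one, Nat.reduceAdd] at hsum
  exact sum_le_hasSum _ (fun j _ => by positivity) hsum

theorem eval_trunc_factorialWeight_le (hα : 0 < α) (hα1 : α ≤ 1) (n : ℕ) :
    (trunc (n / 2 + 1) (PTree.outdegSeries (factorialWeight α))).eval ((3 / n : ℝ) ^ α) ≤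
      1 + (3 / n) ^ α / (1 - (3 / 4) ^ α) ^ 2 := by
  have hρ : (3 / 4 : ℝ) ^ α < 1 := rpow_lt_one (by norm_num) (by norm_num) hα
  rw [← Polynomial.eval₂_id, eval₂_trunc_eq_sum_range, sum_range_succ', add_comm]
  simp only [RingHom.id_apply, PTree.coeff_outdegSeries]
  gcongr
  · simp [factorialWeight]
  · calc _ ≤ ∑ j ∈ range (n / 2), (3 / n : ℝ) ^ α * ((j + 1) * ((3 / 4) ^ α) ^ j) :=
          sum_le_sum fun j hj => factorialWeight_mul_rpow_pow_le hα.le hα1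
            (by rw [mem_range] at hj; omega)
      _ ≤ (3 / n) ^ α / (1 - (3 / 4) ^ α) ^ 2 := by
          rw [← mul_sum, div_eq_mul_one_div (_ ^ α)]
          gcongr
          exact sum_add_one_mul_pow_le (by positivity) hρ _

theorem eval_trunc_factorialWeight_pow_le (hα : 0 < α) (hα1 : α ≤ 1) {n : ℕ} (hn : n ≠ 0) :
    (trunc (n / 2 + 1) (PTree.outdegSeries (factorialWeight α))).eval ((3 / n : ℝ) ^ α) ^ (n + 1) ≤
      exp (6 ^ α / (1 - (3 / 4) ^ α) ^ 2 * (n + 1) ^ (1 - α)) := by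
  have hn1 : (1 : ℝ) ≤ n := Nat.one_le_cast.2 (Nat.one_le_iff_ne_zero.2 hn)
  have hbase : (3 / n : ℝ) ≤ 6 / (n + 1) := by
    rw [div_le_div_iff₀ (by positivity) (by positivity)]; linarith
  have hx : (n + 1) * (3 / n : ℝ) ^ α ≤ 6 ^ α * (n + 1) ^ (1 - α) := by
    calc (n + 1) * (3 / n : ℝ) ^ α ≤ (n + 1) * (6 / (n + 1)) ^ α := by gcongr
      _ = 6 ^ α * (n + 1) ^ (1 - α) := by
          rw [div_rpow (by positivity) (by positivity), rpow_sub (by positivity), rpow_one]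
          ring
  set c : ℝ := (1 - (3 / 4) ^ α) ^ 2
  have : 0 ≤ c := sq_nonneg _
  have heval : 0 ≤ (trunc (n / 2 + 1) (PTree.outdegSeries (factorialWeight α))).eval
      ((3 / n : ℝ) ^ α) := by
    rw [← Polynomial.eval₂_id, eval₂_trunc_eq_sum_range]
    simp only [RingHom.id_apply, PTree.coeff_outdegSeries]
    exact sum_nonneg fun k _ => mul_nonneg (factorialWeight_nonneg α _) (by positivity)
  calc _ ≤ exp ((3 / n) ^ α / c) ^ (n + 1) := by
        gcongr
        exact (eval_trunc_factorialWeight_le hα hα1 n).trans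
          ((add_comm _ _).trans_le (add_one_le_exp _))
    _ = exp ((n + 1) * (3 / n) ^ α / c) := by
        rw [← exp_nat_mul, mul_div_assoc]; push_cast; rfl
    _ ≤ exp (6 ^ α / c * (n + 1) ^ (1 - α)) := by
        rw [div_mul_eq_mul_div]; gcongr

theorem exists_nu_factorialWeight_le (hα : 0 < α) (hα1 : α ≤ 1) :
    ∃ C > 0, ∀ n ≠ 0, nu (factorialWeight α) (n + 1)
        (fun t => C * (n + 1) ^ (1 - α) < n - (t.children.length : ℝ)) ≤
      2 * C * (n + 1) ^ (-α) + (n + 1) * exp (-(n + 1) ^ (1 - α)) := by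
  set c : ℝ := 6 ^ α / (1 - (3 / 4) ^ α) ^ 2
  set r : ℝ := (exp 1 / 3) ^ α
  have he : exp 1 / 3 < 1 := (div_lt_one three_pos).2 exp_one_lt_three
  have hr0 : 0 < r := by positivity
  have hr1 : r < 1 := rpow_lt_one (by positivity) he hα
  have hlog : log r < 0 := log_neg hr0 hr1
  have hC : 0 < (c + 1) / -log r := div_pos (by positivity) (neg_pos.2 hlog)
  refine ⟨(c + 1) / -log r, hC, fun n hn => ?_⟩
  set C := (c + 1) / -log r with hC_def
  set M : ℝ := ((n : ℝ) + 1) ^ (1 - α)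
  have hn1 : (1 : ℝ) ≤ n := Nat.one_le_cast.2 (Nat.one_le_iff_ne_zero.2 hn)
  have hr_pow : r ^ (C * M) = exp (-(c + 1) * M) := by
    rw [rpow_def_of_pos hr0, ← mul_assoc, hC_def, div_neg, mul_neg, mul_div_cancel₀ _ hlog.ne]
  have hM : M = (n + 1) * (n + 1) ^ (-α) := by
    rw [rpow_neg (by positivity), ← div_eq_mul_inv]
    exact (rpow_sub (by positivity) 1 α).trans (by rw [rpow_one])
  refine (nu_lt_sub_length_le (factorialWeight_nonneg α) (by simp [factorialWeight]) hn
    (x := (3 / n) ^ α) (r := r) (a := C * M) (by positivity) hr0 hr1.le (by positivity)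
    fun k hk => factorialWeight_le_mul_pow hα.le hk hn).trans (add_le_add ?_ ?_)
  · rw [div_le_iff₀ (by positivity), hM]
    have : 0 ≤ C * ((n : ℝ) + 1) ^ (-α) := by positivity
    nlinarith
  · gcongr
    calc r ^ (C * M) * _ ≤ exp (-(c + 1) * M) * exp (c * M) := by
          rw [hr_pow]; gcongr; exact eval_trunc_factorialWeight_pow_le hα hα1 hn
      _ = exp (-M) := by rw [← exp_add]; congr 1; ring

theorem tendsto_rpow_neg_add_mul_exp (C : ℝ) (hα : 0 < α) (hα1 : α < 1) :
    Tendsto (fun x : ℝ => C * x ^ (-α) + x * exp (-x ^ (1 - α))) atTop (nhds 0) := by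
  have hβ : 0 < 1 - α := sub_pos.2 hα1
  have hexp := (tendsto_rpow_mul_exp_neg_mul_atTop_nhds_zero (1 / (1 - α)) 1 one_pos).comp
    (tendsto_rpow_atTop hβ)
  have hmul : Tendsto (fun x : ℝ => x * exp (-x ^ (1 - α))) atTop (nhds 0) := by
    refine hexp.congr' ?_
    filter_upwards [eventually_ge_atTop 0] with x hx
    rw [Function.comp_apply, ← rpow_mul hx, mul_one_div_cancel hβ.ne', rpow_one, neg_one_mul]
  simpa using ((tendsto_rpow_neg_atTop hα).const_mul C).add hmul

end FactorialWeights

/-- Theorem 3 (i): with `w_n = ((n−1)!)^α`, `0 < α < 1`, the degree `σ(s) = #children(s)+1`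
satisfies `σ(s) = N − O_p(N^{1−α})`: `(N − σ(s))/N^{1−α}` is bounded in probability. -/
theorem stmt_13 (α : ℝ) (h0 : 0 < α) (h1 : α < 1) :
    ∀ ε : ℝ, 0 < ε → ∃ C : ℝ, 0 < C ∧ ∀ᶠ N : ℕ in atTop,
      nu (fun n => ((n - 1).factorial : ℝ) ^ α) N
        (fun t => C * (N : ℝ) ^ (1 - α) < (N : ℝ) - ((t.children.length : ℝ) + 1)) < ε := by
  intro ε hε
  obtain ⟨C, hC, htail⟩ := exists_nu_factorialWeight_le h0 h1.le
  have hlim := (tendsto_rpow_neg_add_mul_exp (2 * C) h0 h1).comp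
    (tendsto_natCast_atTop_atTop (R := ℝ))
  refine ⟨C, hC, ?_⟩
  filter_upwards [hlim.eventually_lt_const hε, eventually_ge_atTop 2] with N hN hN2
  obtain ⟨n, rfl⟩ := Nat.exists_eq_add_of_le' (one_le_two.trans hN2)
  simp only [Function.comp_apply, Nat.cast_add, Nat.cast_one] at hN
  simp only [Nat.cast_add, Nat.cast_one, add_sub_add_right_eq_sub]
  exact (htail n (by omega)).trans_lt hN
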